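/- There exists a continuous, strictly positive linear functional on L⁰(λ) — i.e. a continuous linear φ with φ(f)≥0 for all f∈L⁰(λ)₊ and φ(f)>0 whenever f∈L⁰(λ)₊ satisfies |λ|*(f>c)>0 for some c>0 — if and only if λ∈ba₀(𝒜). -/

import Mathlib

open Set Filter Topology

namespace FA

/-- An algebra of subsets of `Ω`. -/
structure SetAlg (Ω : Type*) where
  sets : Set (Set Ω)
  empty_mem : ∅ ∈ sets
  compl_mem : ∀ ⦃A⦄, A ∈ sets → Aᶜ ∈ sets
  union_mem : ∀ ⦃A B⦄, A ∈ sets → B ∈ sets → A ∪ B ∈ sets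

/-- A bounded, finitely additive real-valued set function on the algebra `𝒜`,
i.e. an element of `ba(𝒜)`. -/
structure BAMeasure {Ω : Type*} (𝒜 : SetAlg Ω) where
  toFun : Set Ω → ℝ
  map_empty : toFun ∅ = 0
  additive : ∀ ⦃A B : Set Ω⦄, A ∈ 𝒜.sets → B ∈ 𝒜.sets → Disjoint A B →
      toFun (A ∪ B) = toFun A + toFun B
  bounded : ∃ M : ℝ, ∀ A ∈ 𝒜.sets, |toFun A| ≤ M

variable {Ω : Type*} {𝒜 : SetAlg Ω}

/-- Total variation `|λ|(A) = λ⁺(A) + λ⁻(A)`. -/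
noncomputable def var (lam : BAMeasure 𝒜) (A : Set Ω) : ℝ :=
  sSup {x | ∃ B ∈ 𝒜.sets, B ⊆ A ∧ x = lam.toFun B} +
  sSup {x | ∃ B ∈ 𝒜.sets, B ⊆ A ∧ x = -lam.toFun B}

/-- The outer measure `|λ|*(B) = inf {|λ|(A) : A ∈ 𝒜, B ⊆ A}`. -/
noncomputable def outer (lam : BAMeasure 𝒜) (B : Set Ω) : ℝ :=
  sInf {x | ∃ A ∈ 𝒜.sets, B ⊆ A ∧ x = var lam A}

/-- `𝒜`-simple functions. -/
def IsSimple (𝒜 : SetAlg Ω) (f : Ω → ℝ) : Prop :=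
  (Set.range f).Finite ∧ ∀ r : ℝ, f ⁻¹' {r} ∈ 𝒜.sets

/-- `λ`-convergence: `(f n)` converges to `g` in `λ`-measure. -/
def LConv (lam : BAMeasure 𝒜) (f : ℕ → Ω → ℝ) (g : Ω → ℝ) : Prop :=
  ∀ c > (0:ℝ), Tendsto (fun n => outer lam {ω | c < |f n ω - g ω|}) atTop (𝓝 0)

/-- `λ`-Cauchy sequences. -/
def LCauchy (lam : BAMeasure 𝒜) (f : ℕ → Ω → ℝ) : Prop :=
  ∀ c > (0:ℝ), ∀ ε > (0:ℝ), ∃ N : ℕ, ∀ p q : ℕ,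
    outer lam {ω | c < |f (N + p) ω - f (N + q) ω|} < ε

/-- `L⁰(λ)`: `λ`-limits of sequences of `𝒜`-simple functions. -/
def L0 (lam : BAMeasure 𝒜) : Set (Ω → ℝ) :=
  {f | ∃ s : ℕ → Ω → ℝ, (∀ n, IsSimple 𝒜 (s n)) ∧ LConv lam s f}

/-- The metric of `L⁰(λ)`: `d(f,g) = inf {c + |λ|*(|f-g| ≥ c) : c > 0}`. -/
noncomputable def dL0 (lam : BAMeasure 𝒜) (f g : Ω → ℝ) : ℝ :=
  sInf {x | ∃ c > (0:ℝ), x = c + outer lam {ω | c ≤ |f ω - g ω|}}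

/-- A set `K` is bounded in `L⁰(λ)` if `lim_{c→∞} sup_{f∈K} |λ|*(|f|>c) = 0`. -/
def BddL0 (lam : BAMeasure 𝒜) (K : Set (Ω → ℝ)) : Prop :=
  ∀ ε > (0:ℝ), ∃ c₀ : ℝ, ∀ c ≥ c₀, ∀ f ∈ K, outer lam {ω | c < |f ω|} < ε

/-- The nonnegative elements of `L⁰(λ)`. -/
def L0pos (lam : BAMeasure 𝒜) : Set (Ω → ℝ) := {f ∈ L0 lam | ∀ ω, 0 ≤ f ω}

/-- The elementary integral of a simple function with respect to a set function. -/
noncomputable def simpleIntegral (m : Set Ω → ℝ) (f : Ω → ℝ) : ℝ :=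
  ∑ᶠ r : ℝ, r * m (f ⁻¹' {r})

/-- Dunford–Schwartz integrability: there is a sequence of simple functions converging to `f`
in `λ`-measure which is Cauchy in mean. -/
def MemL1 (lam : BAMeasure 𝒜) (f : Ω → ℝ) : Prop :=
  ∃ s : ℕ → Ω → ℝ, (∀ n, IsSimple 𝒜 (s n)) ∧ LConv lam s f ∧
    ∀ ε > (0:ℝ), ∃ N : ℕ, ∀ m ≥ N, ∀ n ≥ N,
      simpleIntegral (var lam) (fun ω => |s m ω - s n ω|) < ε

/-- `L¹(λ)`. -/
def L1 (lam : BAMeasure 𝒜) : Set (Ω → ℝ) := {f | MemL1 lam f}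

open scoped Classical in
/-- The Dunford–Schwartz integral `∫ f dλ`. -/
noncomputable def integral (lam : BAMeasure 𝒜) (f : Ω → ℝ) : ℝ :=
  if h : MemL1 lam f then
    limUnder atTop (fun n => simpleIntegral lam.toFun (h.choose n))
  else 0

open scoped Classical in
/-- The `L¹(λ)` seminorm `∫ |f| d|λ|`. -/
noncomputable def l1Norm (lam : BAMeasure 𝒜) (f : Ω → ℝ) : ℝ :=
  if h : MemL1 lam f then
    limUnder atTop (fun n => simpleIntegral (var lam) (fun ω => |h.choose n ω|))
  else 0

/-- A set is bounded in `L¹(μ)` if the integrals `∫|f| d|μ|` are uniformly bounded. -/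
def BddL1 (mu : BAMeasure 𝒜) (K : Set (Ω → ℝ)) : Prop :=
  ∃ M : ℝ, ∀ f ∈ K, l1Norm mu f ≤ M

/-- Finitely additive probability measures. -/
def IsFAProb (mu : BAMeasure 𝒜) : Prop :=
  mu.toFun Set.univ = 1 ∧ ∀ A ∈ 𝒜.sets, 0 ≤ mu.toFun A

/-- `μ ∈ 𝔓_*(λ)`: a finitely additive probability with `|μ| ≤ c |λ|` and the same null
sets as `λ`. -/
def PStar (lam mu : BAMeasure 𝒜) : Prop :=
  IsFAProb mu ∧ (∃ c : ℝ, 0 ≤ c ∧ ∀ A ∈ 𝒜.sets, var mu A ≤ c * var lam A) ∧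
  ∀ A ∈ 𝒜.sets, (mu.toFun A = 0 ↔ var lam A = 0)

/-- `μ ∈ 𝔓_*(λ; K)`. -/
def PStarWith (lam : BAMeasure 𝒜) (K : Set (Ω → ℝ)) (mu : BAMeasure 𝒜) : Prop :=
  PStar lam mu ∧ K ⊆ L1 mu ∧ BddL1 mu K

/-- `f` is a `λ`-a.s. lower bound of `K`. -/
def ASLowerBound (lam : BAMeasure 𝒜) (f : Ω → ℝ) (K : Set (Ω → ℝ)) : Prop :=
  ∀ c > (0:ℝ), ∀ k ∈ K, outer lam {ω | k ω < f ω - c} = 0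

/-- Absolute continuity `μ ≪ λ` for bounded finitely additive set functions. -/
def AbsCont (mu lam : BAMeasure 𝒜) : Prop :=
  ∀ ε > (0:ℝ), ∃ δ > (0:ℝ), ∀ A ∈ 𝒜.sets, var lam A < δ → var mu A < ε

/-- `λ ∈ ba₀(𝒜)`: the range of `λ` is finite. -/
def FiniteRange (lam : BAMeasure 𝒜) : Prop := (lam.toFun '' 𝒜.sets).Finite

/-- `μ ∈ ba₀(λ)`. -/
def BA0rel (lam mu : BAMeasure 𝒜) : Prop := FiniteRange mu ∧ AbsCont mu lam

/-- Strong continuity: arbitrarily fine finite partitions. -/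
def StronglyContinuous (lam : BAMeasure 𝒜) : Prop :=
  ∀ ε > (0:ℝ), ∃ (N : ℕ) (A : Fin N → Set Ω), (∀ n, A n ∈ 𝒜.sets) ∧
    Pairwise (Function.onFun Disjoint A) ∧ (⋃ n, A n) = Set.univ ∧
    ∀ n, var lam (A n) < ε

/-- Orthogonality of bounded finitely additive set functions. -/
def Orthogonal (mu nu : BAMeasure 𝒜) : Prop :=
  ∀ ε > (0:ℝ), ∃ A ∈ 𝒜.sets, var mu A < ε ∧ var nu Aᶜ < ε

/-- Strong discontinuity: orthogonal to every strongly continuous element of `ba(𝒜)`. -/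
def StronglyDiscontinuous (mu : BAMeasure 𝒜) : Prop :=
  ∀ nu : BAMeasure 𝒜, StronglyContinuous nu → Orthogonal mu nu

/-- Countable additivity of `λ` on the algebra `𝒜`. -/
def CountablyAdditive (lam : BAMeasure 𝒜) : Prop :=
  ∀ A : ℕ → Set Ω, (∀ n, A n ∈ 𝒜.sets) → Pairwise (Function.onFun Disjoint A) →
    (⋃ n, A n) ∈ 𝒜.sets → HasSum (fun n => lam.toFun (A n)) (lam.toFun (⋃ n, A n))

/-- `𝒜` is a σ-algebra. -/
def IsSigmaAlg (𝒜 : SetAlg Ω) : Prop :=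
  ∀ A : ℕ → Set Ω, (∀ n, A n ∈ 𝒜.sets) → (⋃ n, A n) ∈ 𝒜.sets

/-- Linearity of a functional on `L⁰(λ)`. -/
def LinearOnL0 (lam : BAMeasure 𝒜) (φ : (Ω → ℝ) → ℝ) : Prop :=
  (∀ f ∈ L0 lam, ∀ g ∈ L0 lam, φ (f + g) = φ f + φ g) ∧
  (∀ a : ℝ, ∀ f ∈ L0 lam, φ (a • f) = a * φ f)

/-- Continuity of a functional on `L⁰(λ)` with respect to the metric `d`. -/
def ContinuousOnL0 (lam : BAMeasure 𝒜) (φ : (Ω → ℝ) → ℝ) : Prop :=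
  ∀ f ∈ L0 lam, ∀ ε > (0:ℝ), ∃ δ > (0:ℝ), ∀ g ∈ L0 lam, dL0 lam g f < δ → |φ g - φ f| < ε


/-! ### Helper lemmas -/

lemma SetAlg.univ_mem (𝒜 : SetAlg Ω) : Set.univ ∈ 𝒜.sets := by
  simpa using 𝒜.compl_mem 𝒜.empty_mem

lemma SetAlg.inter_mem (𝒜 : SetAlg Ω) {A B : Set Ω} (hA : A ∈ 𝒜.sets) (hB : B ∈ 𝒜.sets) :
    A ∩ B ∈ 𝒜.sets := by
  have := 𝒜.compl_mem (𝒜.union_mem (𝒜.compl_mem hA) (𝒜.compl_mem hB))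
  simpa [Set.compl_union] using this

lemma SetAlg.diff_mem (𝒜 : SetAlg Ω) {A B : Set Ω} (hA : A ∈ 𝒜.sets) (hB : B ∈ 𝒜.sets) :
    A \ B ∈ 𝒜.sets := 𝒜.inter_mem hA (𝒜.compl_mem hB)

/-- The positive part of a set function. -/
noncomputable def ppart (𝒜 : SetAlg Ω) (m : Set Ω → ℝ) (A : Set Ω) : ℝ :=
  sSup {x | ∃ B ∈ 𝒜.sets, B ⊆ A ∧ x = m B}

lemma ppart_bdd {m : Set Ω → ℝ} {M : ℝ} (hb : ∀ A ∈ 𝒜.sets, |m A| ≤ M) (A : Set Ω) :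
    BddAbove {x | ∃ B ∈ 𝒜.sets, B ⊆ A ∧ x = m B} := by
  refine ⟨M, ?_⟩
  rintro x ⟨B, hB, -, rfl⟩
  exact (le_abs_self _).trans (hb B hB)

lemma ppart_le {m : Set Ω → ℝ} {M : ℝ} (hb : ∀ A ∈ 𝒜.sets, |m A| ≤ M) {A B : Set Ω}
    (hB : B ∈ 𝒜.sets) (h : B ⊆ A) : m B ≤ ppart 𝒜 m A :=
  le_csSup (ppart_bdd hb A) ⟨B, hB, h, rfl⟩

lemma ppart_add {m : Set Ω → ℝ} {M : ℝ} (hb : ∀ A ∈ 𝒜.sets, |m A| ≤ M)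
    (h0 : m ∅ = 0)
    (hadd : ∀ ⦃A B : Set Ω⦄, A ∈ 𝒜.sets → B ∈ 𝒜.sets → Disjoint A B → m (A ∪ B) = m A + m B)
    {A B : Set Ω} (hA : A ∈ 𝒜.sets) (hB : B ∈ 𝒜.sets) (hd : Disjoint A B) :
    ppart 𝒜 m (A ∪ B) = ppart 𝒜 m A + ppart 𝒜 m B := by
  have ne : ∀ A : Set Ω, {x | ∃ B ∈ 𝒜.sets, B ⊆ A ∧ x = m B}.Nonempty := fun A =>
    ⟨m ∅, ∅, 𝒜.empty_mem, empty_subset _, rfl⟩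
  apply le_antisymm
  · apply csSup_le (ne _)
    rintro x ⟨D, hD, hDs, rfl⟩
    have e : D = (D ∩ A) ∪ (D ∩ B) := by
      rw [← Set.inter_union_distrib_left, Set.inter_eq_left.2 hDs]
    have := hadd (𝒜.inter_mem hD hA) (𝒜.inter_mem hD hB)
      (hd.mono inter_subset_right inter_subset_right)
    rw [← e] at this
    rw [this]
    exact add_le_add (ppart_le hb (𝒜.inter_mem hD hA) inter_subset_right)
      (ppart_le hb (𝒜.inter_mem hD hB) inter_subset_right)
  · have h1 : ppart 𝒜 m A ≤ ppart 𝒜 m (A ∪ B) - ppart 𝒜 m B := by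
      apply csSup_le (ne _)
      rintro x ⟨D, hD, hDs, rfl⟩
      have h2 : ppart 𝒜 m B ≤ ppart 𝒜 m (A ∪ B) - m D := by
        apply csSup_le (ne _)
        rintro x ⟨E, hE, hEs, rfl⟩
        have := ppart_le hb (𝒜.union_mem hD hE) (Set.union_subset_union hDs hEs)
        rw [hadd hD hE (hd.mono hDs hEs)] at this
        linarith
      linarith
    linarith

lemma var_eq (lam : BAMeasure 𝒜) (A : Set Ω) :
    var lam A = ppart 𝒜 lam.toFun A + ppart 𝒜 (fun B => -lam.toFun B) A := rfl

lemma var_add (lam : BAMeasure 𝒜) {A B : Set Ω} (hA : A ∈ 𝒜.sets) (hB : B ∈ 𝒜.sets)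
    (hd : Disjoint A B) : var lam (A ∪ B) = var lam A + var lam B := by
  obtain ⟨M, hM⟩ := lam.bounded
  rw [var_eq, var_eq, var_eq, ppart_add hM lam.map_empty lam.additive hA hB hd,
    ppart_add (M := M) (by simpa using hM) (by simp [lam.map_empty]) ?_ hA hB hd]
  · ring
  · intro A B hA hB hd
    rw [lam.additive hA hB hd]; ring

lemma abs_le_var (lam : BAMeasure 𝒜) {A : Set Ω} (hA : A ∈ 𝒜.sets) :
    |lam.toFun A| ≤ var lam A := by
  obtain ⟨M, hM⟩ := lam.bounded
  have hM' : ∀ A ∈ 𝒜.sets, |(fun B => -lam.toFun B) A| ≤ M := by simpa using hM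
  have h1 := ppart_le hM hA subset_rfl
  have h2 := ppart_le hM' hA subset_rfl
  have h3 := ppart_le hM 𝒜.empty_mem (empty_subset A)
  have h4 := ppart_le hM' 𝒜.empty_mem (empty_subset A)
  simp only [lam.map_empty, neg_zero] at h3 h4
  rw [var_eq, abs_le]
  constructor <;> linarith

lemma var_nonneg (lam : BAMeasure 𝒜) {A : Set Ω} (hA : A ∈ 𝒜.sets) : 0 ≤ var lam A :=
  (abs_nonneg _).trans (abs_le_var lam hA)

lemma var_empty (lam : BAMeasure 𝒜) : var lam ∅ = 0 := by
  have := var_add lam 𝒜.empty_mem 𝒜.empty_mem (disjoint_bot_left)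
  simp at this
  exact this

lemma var_split (lam : BAMeasure 𝒜) {A B : Set Ω} (hA : A ∈ 𝒜.sets) (hB : B ∈ 𝒜.sets) :
    var lam A = var lam (A ∩ B) + var lam (A \ B) := by
  rw [← var_add lam (𝒜.inter_mem hA hB) (𝒜.diff_mem hA hB)
    (disjoint_sdiff_right.mono_left inter_subset_right), Set.inter_union_diff]

lemma var_mono (lam : BAMeasure 𝒜) {A B : Set Ω} (hA : A ∈ 𝒜.sets) (hB : B ∈ 𝒜.sets)
    (h : A ⊆ B) : var lam A ≤ var lam B := by
  have := var_split lam hB hA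
  rw [Set.inter_eq_right.2 h] at this
  linarith [var_nonneg lam (𝒜.diff_mem hB hA)]

lemma var_union_le (lam : BAMeasure 𝒜) {A B : Set Ω} (hA : A ∈ 𝒜.sets) (hB : B ∈ 𝒜.sets) :
    var lam (A ∪ B) ≤ var lam A + var lam B := by
  have h := var_add lam hA (𝒜.diff_mem hB hA) disjoint_sdiff_right
  rw [Set.union_diff_self] at h
  linarith [var_mono lam (𝒜.diff_mem hB hA) hB diff_subset]

lemma outer_bdd (lam : BAMeasure 𝒜) (B : Set Ω) :
    BddBelow {x | ∃ A ∈ 𝒜.sets, B ⊆ A ∧ x = var lam A} := by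
  refine ⟨0, ?_⟩
  rintro x ⟨A, hA, -, rfl⟩
  exact var_nonneg lam hA

lemma outer_ne (lam : BAMeasure 𝒜) (B : Set Ω) :
    {x | ∃ A ∈ 𝒜.sets, B ⊆ A ∧ x = var lam A}.Nonempty :=
  ⟨_, Set.univ, 𝒜.univ_mem, subset_univ _, rfl⟩

lemma outer_nonneg (lam : BAMeasure 𝒜) (B : Set Ω) : 0 ≤ outer lam B := by
  apply le_csInf (outer_ne lam B)
  rintro x ⟨A, hA, -, rfl⟩
  exact var_nonneg lam hA

lemma outer_le (lam : BAMeasure 𝒜) {A B : Set Ω} (hA : A ∈ 𝒜.sets) (h : B ⊆ A) :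
    outer lam B ≤ var lam A :=
  csInf_le (outer_bdd lam B) ⟨A, hA, h, rfl⟩

lemma outer_eq (lam : BAMeasure 𝒜) {A : Set Ω} (hA : A ∈ 𝒜.sets) :
    outer lam A = var lam A := by
  apply le_antisymm (outer_le lam hA subset_rfl)
  apply le_csInf (outer_ne lam A)
  rintro x ⟨B, hB, h, rfl⟩
  exact var_mono lam hA hB h

lemma outer_lt (lam : BAMeasure 𝒜) {B : Set Ω} {δ : ℝ} (h : outer lam B < δ) :
    ∃ A ∈ 𝒜.sets, B ⊆ A ∧ var lam A < δ := by
  obtain ⟨x, ⟨A, hA, hB, rfl⟩, hx⟩ := exists_lt_of_csInf_lt (outer_ne lam B) h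
  exact ⟨A, hA, hB, hx⟩

lemma dL0_le (lam : BAMeasure 𝒜) (f g : Ω → ℝ) {c : ℝ} (hc : 0 < c) :
    dL0 lam f g ≤ c + outer lam {ω | c ≤ |f ω - g ω|} := by
  refine csInf_le ⟨0, ?_⟩ ⟨c, hc, rfl⟩
  rintro x ⟨c, hc, rfl⟩
  exact add_nonneg hc.le (outer_nonneg _ _)

lemma dL0_lt (lam : BAMeasure 𝒜) (f g : Ω → ℝ) {δ : ℝ} (h : dL0 lam f g < δ) :
    ∃ c > (0:ℝ), c + outer lam {ω | c ≤ |f ω - g ω|} < δ := by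
  obtain ⟨x, ⟨c, hc, rfl⟩, hx⟩ := exists_lt_of_csInf_lt
    (s := {x | ∃ c > (0:ℝ), x = c + outer lam {ω | c ≤ |f ω - g ω|}})
    ⟨_, 1, one_pos, rfl⟩ h
  exact ⟨c, hc, hx⟩

lemma simple_mem_L0 (lam : BAMeasure 𝒜) {f : Ω → ℝ} (hf : IsSimple 𝒜 f) : f ∈ L0 lam := by
  refine ⟨fun _ => f, fun _ => hf, fun c hc => ?_⟩
  have : {ω | c < |f ω - f ω|} = ∅ := by
    ext ω; simp [hc.le]
  simp only [this, outer_eq lam 𝒜.empty_mem, var_empty]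
  exact tendsto_const_nhds

open scoped Classical in
lemma simple_ind {A : Set Ω} (hA : A ∈ 𝒜.sets) (a : ℝ) :
    IsSimple 𝒜 (A.indicator fun _ => a) := by
  constructor
  · apply Set.Finite.subset (s := {0, a}) (by simp)
    rintro x ⟨ω, rfl⟩
    by_cases h : ω ∈ A <;> simp [h]
  · intro r
    rw [Set.indicator_const_preimage_eq_union]
    refine 𝒜.union_mem ?_ ?_
    · split_ifs
      exacts [hA, 𝒜.empty_mem]
    · split_ifs
      exacts [𝒜.compl_mem hA, 𝒜.empty_mem]

/-- `A` cannot be split into two non-null pieces. -/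
def AtomLike (lam : BAMeasure 𝒜) (A : Set Ω) : Prop :=
  ∀ B ∈ 𝒜.sets, B ⊆ A → var lam B = 0 ∨ var lam (A \ B) = 0

lemma atom_induction (lam : BAMeasure 𝒜) {δ : ℝ} (hδ : 0 < δ)
    (hgap : ∀ A ∈ 𝒜.sets, var lam A < δ → var lam A = 0) (P : Set Ω → Prop)
    (hnull : ∀ A ∈ 𝒜.sets, var lam A = 0 → P A)
    (hatom : ∀ A ∈ 𝒜.sets, 0 < var lam A → AtomLike lam A → P A)
    (hsplit : ∀ A ∈ 𝒜.sets, ∀ B ∈ 𝒜.sets, Disjoint A B → P A → P B → P (A ∪ B)) :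
    ∀ A ∈ 𝒜.sets, P A := by
  have key : ∀ n : ℕ, ∀ A ∈ 𝒜.sets, var lam A < n * δ → P A := by
    intro n
    induction n with
    | zero =>
      intro A hA h
      simp only [Nat.cast_zero, zero_mul] at h
      linarith [var_nonneg lam hA]
    | succ n ih =>
      intro A hA h
      push_cast at h
      by_cases h0 : var lam A = 0
      · exact hnull A hA h0
      by_cases hat : AtomLike lam A
      · exact hatom A hA (lt_of_le_of_ne (var_nonneg lam hA) (Ne.symm h0)) hat
      unfold AtomLike at hat
      push Not at hat
      obtain ⟨B, hB, hBA, h1, h2⟩ := hat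
      have hD := 𝒜.diff_mem hA hB
      have h1' : δ ≤ var lam B := not_lt.1 fun h => h1 (hgap B hB h)
      have h2' : δ ≤ var lam (A \ B) := not_lt.1 fun h => h2 (hgap _ hD h)
      have hs := var_split lam hA hB
      rw [Set.inter_eq_right.2 hBA] at hs
      have := hsplit B hB _ hD disjoint_sdiff_right (ih B hB (by linarith))
        (ih _ hD (by linarith))
      rwa [Set.union_diff_cancel hBA] at this
  intro A hA
  obtain ⟨n, hn⟩ := exists_nat_gt (var lam A / δ)
  exact key n A hA ((div_lt_iff₀ hδ).1 hn)

lemma finiteRange_of_gap (lam : BAMeasure 𝒜) {δ : ℝ} (hδ : 0 < δ)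
    (hgap : ∀ A ∈ 𝒜.sets, var lam A < δ → var lam A = 0) : FiniteRange lam := by
  have zero_of : ∀ B ∈ 𝒜.sets, var lam B = 0 → lam.toFun B = 0 := fun B hB h =>
    abs_nonpos_iff.1 (h ▸ abs_le_var lam hB)
  have h := atom_induction lam hδ hgap
    (fun A => (lam.toFun '' {B | B ∈ 𝒜.sets ∧ B ⊆ A}).Finite) ?_ ?_ ?_ _ 𝒜.univ_mem
  · simpa [FiniteRange] using h
  · intro A hA h0
    apply (Set.finite_singleton (0:ℝ)).subset
    rintro x ⟨B, ⟨hB, hBA⟩, rfl⟩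
    exact zero_of B hB (le_antisymm (h0 ▸ var_mono lam hB hA hBA) (var_nonneg lam hB))
  · intro A hA _ hat
    apply (Set.toFinite ({0, lam.toFun A} : Set ℝ)).subset
    rintro x ⟨B, ⟨hB, hBA⟩, rfl⟩
    rcases hat B hB hBA with h | h
    · left; exact zero_of B hB h
    · right
      have h1 := lam.additive hB (𝒜.diff_mem hA hB) disjoint_sdiff_right
      rw [Set.union_diff_cancel hBA, zero_of _ (𝒜.diff_mem hA hB) h, add_zero] at h1
      exact h1.symm
  · intro A hA B hB hd h1 h2
    apply (Set.Finite.image2 (fun x y => x + y) h1 h2).subset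
    rintro x ⟨D, ⟨hD, hDs⟩, rfl⟩
    refine ⟨_, ⟨D ∩ A, ⟨𝒜.inter_mem hD hA, inter_subset_right⟩, rfl⟩, _,
      ⟨D ∩ B, ⟨𝒜.inter_mem hD hB, inter_subset_right⟩, rfl⟩, ?_⟩
    have := lam.additive (𝒜.inter_mem hD hA) (𝒜.inter_mem hD hB)
      (hd.mono inter_subset_right inter_subset_right)
    rw [← Set.inter_union_distrib_left, Set.inter_eq_left.2 hDs] at this
    exact this.symm

lemma gap_of_functional (lam : BAMeasure 𝒜) (φ : (Ω → ℝ) → ℝ) (hlin : LinearOnL0 lam φ)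
    (hcont : ContinuousOnL0 lam φ)
    (hpos : ∀ f ∈ L0pos lam, (∃ c > (0:ℝ), 0 < outer lam {ω | c < f ω}) → 0 < φ f) :
    ∃ δ > (0:ℝ), ∀ A ∈ 𝒜.sets, var lam A < δ → var lam A = 0 := by
  have hz : (0 : Ω → ℝ) ∈ L0 lam := by
    have := simple_mem_L0 lam (simple_ind 𝒜.empty_mem 0)
    rw [Set.indicator_empty] at this
    exact this
  have hφ0 : φ 0 = 0 := by
    have := hlin.2 0 0 hz
    simpa using this
  obtain ⟨δ, hδ, h⟩ := hcont 0 hz 1 one_pos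
  refine ⟨δ, hδ, fun A hA hlt => ?_⟩
  by_contra hne
  have hvA : 0 < var lam A := lt_of_le_of_ne (var_nonneg lam hA) (Ne.symm hne)
  have h1 : 0 < φ (A.indicator fun _ => 1) := by
    apply hpos _ ⟨simple_mem_L0 lam (simple_ind hA 1), fun ω => ?_⟩
    · refine ⟨1/2, by norm_num, ?_⟩
      have : {ω | (1/2 : ℝ) < A.indicator (fun _ => 1) ω} = A := by
        ext ω
        by_cases hω : ω ∈ A <;> simp [hω] <;> norm_num
      rw [this, outer_eq lam hA]
      exact hvA
    · exact Set.indicator_nonneg (fun _ _ => zero_le_one) ω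
  set a := (φ (A.indicator fun _ => 1))⁻¹ with ha
  have h2 : φ (a • A.indicator fun _ => 1) = 1 := by
    rw [hlin.2 _ _ (simple_mem_L0 lam (simple_ind hA 1))]
    exact inv_mul_cancel₀ h1.ne'
  have e : (a • A.indicator fun _ => (1:ℝ)) = A.indicator fun _ => a := by
    ext ω
    by_cases hω : ω ∈ A <;> simp [hω]
  rw [e] at h2
  have h3 := h _ (simple_mem_L0 lam (simple_ind hA a)) ?_
  · rw [h2, hφ0] at h3
    norm_num at h3
  · have hc : 0 < (δ - var lam A) / 2 := by linarith
    refine (dL0_le lam _ _ hc).trans_lt ?_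
    have : outer lam {ω | (δ - var lam A) / 2 ≤ |A.indicator (fun _ => a) ω - (0 : Ω → ℝ) ω|}
        ≤ var lam A := by
      apply outer_le lam hA
      intro ω hω
      by_contra hn
      simp [hn] at hω
      linarith
    linarith

/-! ### The converse -/

lemma var_range_finite (lam : BAMeasure 𝒜) (hfin : FiniteRange lam) :
    (var lam '' 𝒜.sets).Finite := by
  have hneg : ((fun x => -x) '' (lam.toFun '' 𝒜.sets)).Finite := hfin.image _
  apply (Set.Finite.image2 (fun x y => x + y) hfin hneg).subset
  rintro _ ⟨A, hA, rfl⟩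
  have key : ∀ m : Set Ω → ℝ, (m '' 𝒜.sets).Finite → ppart 𝒜 m A ∈ m '' 𝒜.sets := by
    intro m hm
    have hne : {x | ∃ B ∈ 𝒜.sets, B ⊆ A ∧ x = m B}.Nonempty :=
      ⟨m ∅, ∅, 𝒜.empty_mem, empty_subset _, rfl⟩
    have hsub : {x | ∃ B ∈ 𝒜.sets, B ⊆ A ∧ x = m B} ⊆ m '' 𝒜.sets := by
      rintro x ⟨B, hB, -, rfl⟩
      exact ⟨B, hB, rfl⟩
    exact hsub (hne.csSup_mem (hm.subset hsub))
  refine ⟨_, key _ hfin, _, ?_, (var_eq lam A).symm⟩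
  have := key (fun B => -lam.toFun B) (by rwa [Set.image_image] at hneg)
  rwa [Set.image_image]

lemma exists_gap_real {S : Set ℝ} (hS : S.Finite) : ∃ δ > (0:ℝ), ∀ x ∈ S, 0 < x → δ ≤ x := by
  induction S, hS using Set.Finite.induction_on with
  | empty => exact ⟨1, one_pos, by simp⟩
  | @insert a s _ _ ih =>
    obtain ⟨δ, hδ, h⟩ := ih
    by_cases ha : 0 < a
    · refine ⟨min δ a, lt_min hδ ha, ?_⟩
      rintro x (rfl | hx) hx0
      · exact min_le_right _ _
      · exact (min_le_left _ _).trans (h x hx hx0)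
    · refine ⟨δ, hδ, ?_⟩
      rintro x (rfl | hx) hx0
      · exact absurd hx0 ha
      · exact h x hx hx0

lemma gap_of_finiteRange (lam : BAMeasure 𝒜) (hfin : FiniteRange lam) :
    ∃ δ > (0:ℝ), ∀ A ∈ 𝒜.sets, var lam A < δ → var lam A = 0 := by
  obtain ⟨δ, hδ, h⟩ := exists_gap_real (var_range_finite lam hfin)
  refine ⟨δ, hδ, fun A hA hlt => ?_⟩
  by_contra hne
  have := h _ ⟨A, hA, rfl⟩ (lt_of_le_of_ne (var_nonneg lam hA) (Ne.symm hne))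
  linarith

lemma exists_atoms (lam : BAMeasure 𝒜) {δ : ℝ} (hδ : 0 < δ)
    (hgap : ∀ A ∈ 𝒜.sets, var lam A < δ → var lam A = 0) :
    ∃ L : Finset (Set Ω), (∀ C ∈ L, C ∈ 𝒜.sets ∧ 0 < var lam C ∧ AtomLike lam C) ∧
      ∀ B ∈ 𝒜.sets, 0 < var lam B → ∃ C ∈ L, 0 < var lam (B ∩ C) := by
  classical
  have h := atom_induction lam hδ hgap
    (fun A => ∃ L : Finset (Set Ω), (∀ C ∈ L, C ∈ 𝒜.sets ∧ 0 < var lam C ∧ AtomLike lam C) ∧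
      ∀ B ∈ 𝒜.sets, B ⊆ A → 0 < var lam B → ∃ C ∈ L, 0 < var lam (B ∩ C)) ?_ ?_ ?_ _ 𝒜.univ_mem
  · obtain ⟨L, h1, h2⟩ := h
    exact ⟨L, h1, fun B hB h => h2 B hB (subset_univ _) h⟩
  · intro A hA h0
    refine ⟨∅, by simp, fun B hB hBA h => ?_⟩
    have := var_mono lam hB hA hBA
    linarith
  · intro A hA hv hat
    refine ⟨{A}, by simp [hA, hv, hat], fun B hB hBA h => ⟨A, by simp, ?_⟩⟩
    rwa [Set.inter_eq_left.2 hBA]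
  · rintro A hA B hB hd ⟨L, h1, h2⟩ ⟨L', h1', h2'⟩
    refine ⟨L ∪ L', ?_, fun D hD hDs hv => ?_⟩
    · intro C hC
      rcases Finset.mem_union.1 hC with h | h
      exacts [h1 C h, h1' C h]
    · have e := var_add lam (𝒜.inter_mem hD hA) (𝒜.inter_mem hD hB)
        (hd.mono inter_subset_right inter_subset_right)
      rw [← Set.inter_union_distrib_left, Set.inter_eq_left.2 hDs] at e
      have sub : ∀ E ∈ 𝒜.sets, ∀ C ∈ 𝒜.sets, 0 < var lam (D ∩ E ∩ C) → 0 < var lam (D ∩ C) := by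
        intro E hE C hC h
        exact h.trans_le (var_mono lam (𝒜.inter_mem (𝒜.inter_mem hD hE) hC) (𝒜.inter_mem hD hC)
          (Set.inter_subset_inter_left _ inter_subset_left))
      by_cases hp : 0 < var lam (D ∩ A)
      · obtain ⟨C, hC, h⟩ := h2 _ (𝒜.inter_mem hD hA) inter_subset_right hp
        exact ⟨C, Finset.mem_union_left _ hC, sub A hA C (h1 C hC).1 h⟩
      · obtain ⟨C, hC, h⟩ := h2' _ (𝒜.inter_mem hD hB) inter_subset_right (by linarith)
        exact ⟨C, Finset.mem_union_right _ hC, sub B hB C (h1' C hC).1 h⟩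

/-- The filter of sets containing `C` up to a null set. -/
def atomFilter (lam : BAMeasure 𝒜) (C : Set Ω) : Filter Ω where
  sets := {B | ∃ N ∈ 𝒜.sets, var lam N = 0 ∧ C \ N ⊆ B}
  univ_sets := ⟨∅, 𝒜.empty_mem, var_empty lam, subset_univ _⟩
  sets_of_superset := by
    rintro x y ⟨N, hN, h0, h⟩ hxy
    exact ⟨N, hN, h0, h.trans hxy⟩
  inter_sets := by
    rintro x y ⟨N, hN, h0, h⟩ ⟨N', hN', h0', h'⟩
    refine ⟨N ∪ N', 𝒜.union_mem hN hN', ?_, ?_⟩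
    · have := var_union_le lam hN hN'
      have := var_nonneg lam (𝒜.union_mem hN hN')
      linarith
    · intro ω hω
      exact ⟨h ⟨hω.1, fun hn => hω.2 (Or.inl hn)⟩, h' ⟨hω.1, fun hn => hω.2 (Or.inr hn)⟩⟩

lemma mem_atomFilter (lam : BAMeasure 𝒜) {C B : Set Ω} :
    B ∈ atomFilter lam C ↔ ∃ N ∈ 𝒜.sets, var lam N = 0 ∧ C \ N ⊆ B := Iff.rfl

lemma atomFilter_neBot (lam : BAMeasure 𝒜) {C : Set Ω} (hC : C ∈ 𝒜.sets)
    (hv : 0 < var lam C) : (atomFilter lam C).NeBot := by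
  refine ⟨fun h => ?_⟩
  rw [← Filter.empty_mem_iff_bot, mem_atomFilter] at h
  obtain ⟨N, hN, h0, hs⟩ := h
  have := var_mono lam hC hN (Set.diff_eq_empty.1 (Set.subset_empty_iff.1 hs))
  linarith

lemma compl_mem_atomFilter (lam : BAMeasure 𝒜) {N : Set Ω} (hN : N ∈ 𝒜.sets)
    (h0 : var lam N = 0) (C : Set Ω) : Nᶜ ∈ atomFilter lam C :=
  ⟨N, hN, h0, fun _ h => h.2⟩

lemma mem_atomFilter_of_pos (lam : BAMeasure 𝒜) {B C : Set Ω} (hB : B ∈ 𝒜.sets)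
    (hC : C ∈ 𝒜.sets) (hat : AtomLike lam C) (hv : 0 < var lam (B ∩ C)) :
    B ∈ atomFilter lam C := by
  rcases hat (B ∩ C) (𝒜.inter_mem hB hC) inter_subset_right with h | h
  · exact absurd h hv.ne'
  · refine ⟨_, 𝒜.diff_mem hC (𝒜.inter_mem hB hC), h, ?_⟩
    rintro ω ⟨h1, h2⟩
    by_contra hn
    exact h2 ⟨h1, fun h => hn h.1⟩

lemma null_biUnion (lam : BAMeasure 𝒜) {S : Set ℝ} (hS : S.Finite) (g : ℝ → Set Ω)
    (hg : ∀ r, g r ∈ 𝒜.sets) (h0 : ∀ r, var lam (g r) = 0) :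
    (⋃ r ∈ S, g r) ∈ 𝒜.sets ∧ var lam (⋃ r ∈ S, g r) = 0 := by
  induction S, hS using Set.Finite.induction_on with
  | empty => simp [𝒜.empty_mem, var_empty]
  | @insert a s _ _ ih =>
    rw [Set.biUnion_insert]
    have hm := 𝒜.union_mem (hg a) ih.1
    refine ⟨hm, le_antisymm ?_ (var_nonneg lam hm)⟩
    have := var_union_le lam (hg a) ih.1
    rw [h0, ih.2] at this
    linarith

lemma simple_const (lam : BAMeasure 𝒜) {s : Ω → ℝ} (hs : IsSimple 𝒜 s) {C : Set Ω}
    (hC : C ∈ 𝒜.sets) (hv : 0 < var lam C) (hat : AtomLike lam C) :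
    ∃ r, s ⁻¹' {r} ∈ atomFilter lam C := by
  by_contra hcon
  push Not at hcon
  have h0 : ∀ r, var lam (s ⁻¹' {r} ∩ C) = 0 := by
    intro r
    by_contra hne
    exact hcon r (mem_atomFilter_of_pos lam (hs.2 r) hC hat
      (lt_of_le_of_ne (var_nonneg lam (𝒜.inter_mem (hs.2 r) hC)) (Ne.symm hne)))
  obtain ⟨h1, h2⟩ := null_biUnion lam hs.1 (fun r => s ⁻¹' {r} ∩ C)
    (fun r => 𝒜.inter_mem (hs.2 r) hC) h0
  have := var_mono lam hC h1 (by
    intro ω hω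
    simp only [Set.mem_iUnion]
    exact ⟨s ω, ⟨ω, rfl⟩, rfl, hω⟩)
  linarith

lemma L0_approx (lam : BAMeasure 𝒜) {δ : ℝ} (hδ : 0 < δ)
    (hgap : ∀ A ∈ 𝒜.sets, var lam A < δ → var lam A = 0) {f : Ω → ℝ} (hf : f ∈ L0 lam)
    {c : ℝ} (hc : 0 < c) : ∃ s, IsSimple 𝒜 s ∧ ∃ N ∈ 𝒜.sets, var lam N = 0 ∧
      ∀ ω ∉ N, |s ω - f ω| ≤ c := by
  obtain ⟨s, hs, hconv⟩ := hf
  obtain ⟨n, hn⟩ := ((hconv c hc).eventually (gt_mem_nhds hδ)).exists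
  obtain ⟨N, hN, hsub, hlt⟩ := outer_lt lam hn
  refine ⟨s n, hs n, N, hN, hgap N hN hlt, fun ω hω => ?_⟩
  by_contra hcon
  exact hω (hsub (not_le.1 hcon))

lemma L0_tendsto (lam : BAMeasure 𝒜) {δ : ℝ} (hδ : 0 < δ)
    (hgap : ∀ A ∈ 𝒜.sets, var lam A < δ → var lam A = 0) {f : Ω → ℝ} (hf : f ∈ L0 lam)
    {C : Set Ω} (hC : C ∈ 𝒜.sets) (hv : 0 < var lam C) (hat : AtomLike lam C) :
    Tendsto f (atomFilter lam C) (𝓝 (limUnder (atomFilter lam C) f)) := by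
  have := atomFilter_neBot lam hC hv
  apply tendsto_nhds_limUnder
  apply cauchy_map_iff_exists_tendsto.1
  rw [Metric.cauchy_iff]
  refine ⟨inferInstance, fun ε hε => ?_⟩
  obtain ⟨s, hs, N, hN, h0, hNs⟩ := L0_approx lam hδ hgap hf (c := ε / 3) (by linarith)
  obtain ⟨r, hr⟩ := simple_const lam hs hC hv hat
  refine ⟨f '' (s ⁻¹' {r} ∩ Nᶜ), Filter.image_mem_map
    (Filter.inter_mem hr (compl_mem_atomFilter lam hN h0 C)), ?_⟩
  rintro _ ⟨x, ⟨hx, hxN⟩, rfl⟩ _ ⟨y, ⟨hy, hyN⟩, rfl⟩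
  have h1 := abs_le.1 (hNs x hxN)
  have h2 := abs_le.1 (hNs y hyN)
  have hx' : s x = r := hx
  have hy' : s y = r := hy
  rw [Real.dist_eq, abs_lt]
  rw [hx'] at h1
  rw [hy'] at h2
  constructor <;> linarith

lemma functional_of_finiteRange (lam : BAMeasure 𝒜) (hfin : FiniteRange lam) :
    ∃ φ : (Ω → ℝ) → ℝ, LinearOnL0 lam φ ∧ ContinuousOnL0 lam φ ∧
      (∀ f ∈ L0pos lam, 0 ≤ φ f) ∧
      (∀ f ∈ L0pos lam, (∃ c > (0:ℝ), 0 < outer lam {ω | c < f ω}) → 0 < φ f) := by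
  obtain ⟨δ, hδ, hgap⟩ := gap_of_finiteRange lam hfin
  obtain ⟨L, hL, hcov⟩ := exists_atoms lam hδ hgap
  have hne : ∀ C ∈ L, (atomFilter lam C).NeBot := fun C hC =>
    atomFilter_neBot lam (hL C hC).1 (hL C hC).2.1
  have ht : ∀ f ∈ L0 lam, ∀ C ∈ L,
      Tendsto f (atomFilter lam C) (𝓝 (limUnder (atomFilter lam C) f)) := fun f hf C hC =>
    L0_tendsto lam hδ hgap hf (hL C hC).1 (hL C hC).2.1 (hL C hC).2.2
  have hnn : ∀ f ∈ L0pos lam, ∀ C ∈ L, 0 ≤ limUnder (atomFilter lam C) f := by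
    intro f hf C hC
    have := hne C hC
    exact ge_of_tendsto' (ht f hf.1 C hC) hf.2
  refine ⟨fun f => ∑ C ∈ L, limUnder (atomFilter lam C) f, ⟨?_, ?_⟩, ?_, ?_, ?_⟩
  · intro f hf g hg
    rw [← Finset.sum_add_distrib]
    refine Finset.sum_congr rfl fun C hC => ?_
    have := hne C hC
    exact ((ht f hf C hC).add (ht g hg C hC)).limUnder_eq
  · intro a f hf
    rw [Finset.mul_sum]
    refine Finset.sum_congr rfl fun C hC => ?_
    have := hne C hC
    exact ((ht f hf C hC).const_mul a).limUnder_eq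
  · intro f hf ε hε
    have hk : (0:ℝ) < L.card + 1 := by positivity
    refine ⟨min δ (ε / (L.card + 1)), lt_min hδ (by positivity), fun g hg hd => ?_⟩
    obtain ⟨c, hc, hlt⟩ := dL0_lt lam _ _ hd
    have ho := outer_nonneg lam {ω | c ≤ |g ω - f ω|}
    have hcε : c < ε / (L.card + 1) := by
      have := min_le_right δ (ε / (L.card + 1)); linarith
    have hoδ : outer lam {ω | c ≤ |g ω - f ω|} < δ := by
      have := min_le_left δ (ε / (L.card + 1)); linarith
    obtain ⟨N, hN, hsub, hNlt⟩ := outer_lt lam hoδ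
    have h0 := hgap N hN hNlt
    have hbd : ∀ C ∈ L, |limUnder (atomFilter lam C) g - limUnder (atomFilter lam C) f| ≤ c := by
      intro C hC
      have := hne C hC
      refine le_of_tendsto ((ht g hg C hC).sub (ht f hf C hC)).abs ?_
      filter_upwards [compl_mem_atomFilter lam hN h0 C] with ω hω
      by_contra hcon
      exact hω (hsub (not_le.1 hcon).le)
    rw [← Finset.sum_sub_distrib]
    refine (Finset.abs_sum_le_sum_abs _ _).trans_lt ?_
    refine (Finset.sum_le_card_nsmul _ _ c hbd).trans_lt ?_
    rw [nsmul_eq_mul]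
    rw [lt_div_iff₀ hk] at hcε
    linarith
  · intro f hf
    exact Finset.sum_nonneg (hnn f hf)
  · rintro f hf ⟨c, hc, hpos⟩
    obtain ⟨s, hs, N, hN, h0, hNs⟩ := L0_approx lam hδ hgap hf.1 (c := c / 4) (by linarith)
    have hex : ∃ C ∈ L, ∃ r, c / 2 < r ∧ s ⁻¹' {r} ∈ atomFilter lam C := by
      by_contra hcon
      push Not at hcon
      classical
      have hnull : ∀ r, var lam (if c / 2 < r then s ⁻¹' {r} else ∅) = 0 := by
        intro r
        split_ifs with hr
        · by_contra hne0
          obtain ⟨C, hC, hp⟩ := hcov _ (hs.2 r)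
            (lt_of_le_of_ne (var_nonneg lam (hs.2 r)) (Ne.symm hne0))
          exact hcon C hC r hr (mem_atomFilter_of_pos lam (hs.2 r) (hL C hC).1 (hL C hC).2.2 hp)
        · exact var_empty lam
      obtain ⟨h1, h2⟩ := null_biUnion lam hs.1 (fun r => if c / 2 < r then s ⁻¹' {r} else ∅)
        (fun r => by split_ifs; exacts [hs.2 r, 𝒜.empty_mem]) hnull
      have h3 := var_union_le lam hN h1
      have h4 := outer_le lam (B := {ω | c < f ω}) (𝒜.union_mem hN h1) (by
        intro ω hω
        by_cases hωN : ω ∈ N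
        · exact Or.inl hωN
        · right
          simp only [Set.mem_iUnion]
          refine ⟨s ω, ⟨ω, rfl⟩, ?_⟩
          have h5 := (abs_le.1 (hNs ω hωN)).1
          have h6 : c < f ω := hω
          rw [if_pos (by linarith)]
          rfl)
      linarith
    obtain ⟨C, hC, r, hr, hmem⟩ := hex
    have := hne C hC
    have hlim : c / 4 ≤ limUnder (atomFilter lam C) f := by
      refine ge_of_tendsto (ht f hf.1 C hC) ?_
      filter_upwards [hmem, compl_mem_atomFilter lam hN h0 C] with ω h1 h2
      have h3 := (abs_le.1 (hNs ω h2)).2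
      have h4 : s ω = r := h1
      linarith
    exact Finset.sum_pos' (hnn f hf) ⟨C, hC, by linarith⟩


/-- Corollary 5: `L⁰(λ)` admits a continuous, strictly positive linear functional if and
only if `λ ∈ ba₀(𝒜)`. -/
theorem stmt_2 {Ω : Type*} {𝒜 : SetAlg Ω} (lam : BAMeasure 𝒜) :
    (∃ φ : (Ω → ℝ) → ℝ, LinearOnL0 lam φ ∧ ContinuousOnL0 lam φ ∧
      (∀ f ∈ L0pos lam, 0 ≤ φ f) ∧
      (∀ f ∈ L0pos lam, (∃ c > (0:ℝ), 0 < outer lam {ω | c < f ω}) → 0 < φ f)) ↔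
    FiniteRange lam := by
  constructor
  · rintro ⟨φ, h1, h2, -, h4⟩
    obtain ⟨δ, hδ, hgap⟩ := gap_of_functional lam φ h1 h2 h4
    exact finiteRange_of_gap lam hδ hgap
  · exact functional_of_finiteRange lam

end FA
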